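/- Let K₁ and K₂ be bounded operators on H and let {Υ_ξ}_{ξ∈Ω} be a δ-tight continuous K₁-g-frame for H (δ > 0). If ran(K₂) ⊆ ran(K₁), then {Υ_ξ}_{ξ∈Ω} is a continuous K₂-g-frame for H. -/

import Mathlib

open MeasureTheory ContinuousLinearMap

noncomputable section

/-- `Υ` is a continuous `K`-g-frame for `H` with bounds `A ≤ B`. -/
def IsCKgFrame {Ω H E : Type*} [MeasurableSpace Ω]
    [NormedAddCommGroup H] [InnerProductSpace ℂ H] [CompleteSpace H]
    [NormedAddCommGroup E] [InnerProductSpace ℂ E]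
    (ν : Measure Ω) (K : H →L[ℂ] H) (Υ : Ω → H →L[ℂ] E) (A B : ℝ) : Prop :=
  0 < A ∧ A ≤ B ∧ ∀ h : H,
    Integrable (fun ξ => ‖Υ ξ h‖ ^ 2) ν ∧
    A * ‖adjoint K h‖ ^ 2 ≤ ∫ ξ, ‖Υ ξ h‖ ^ 2 ∂ν ∧
    ∫ ξ, ‖Υ ξ h‖ ^ 2 ∂ν ≤ B * ‖h‖ ^ 2

/-- `Υ` is a `δ`-tight continuous `K`-g-frame for `H`. -/
def IsTightCKgFrame {Ω H E : Type*} [MeasurableSpace Ω]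
    [NormedAddCommGroup H] [InnerProductSpace ℂ H] [CompleteSpace H]
    [NormedAddCommGroup E] [InnerProductSpace ℂ E]
    (ν : Measure Ω) (K : H →L[ℂ] H) (Υ : Ω → H →L[ℂ] E) (δ : ℝ) : Prop :=
  0 < δ ∧ ∀ h : H,
    Integrable (fun ξ => ‖Υ ξ h‖ ^ 2) ν ∧
    ∫ ξ, ‖Υ ξ h‖ ^ 2 ∂ν = δ * ‖adjoint K h‖ ^ 2

/-!
By Douglas' factorization, `ran K₂ ⊆ ran K₁` gives a bounded `D` with `K₂ = K₁ D`: invert `K₁` on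
the orthogonal complement of its kernel and apply the closed graph theorem. Then `K₂* = D* K₁*`, so
`‖K₂* h‖ ≤ ‖D‖ ‖K₁* h‖` and every lower `K₁`-frame bound yields a lower `K₂`-frame bound.
-/

section Factorization

variable {𝕜 F G H : Type*} [NontriviallyNormedField 𝕜]
  [NormedAddCommGroup F] [NormedSpace 𝕜 F] [CompleteSpace F]
  [NormedAddCommGroup G] [NormedSpace 𝕜 G] [CompleteSpace G]
  [AddCommGroup H] [Module 𝕜 H] [TopologicalSpace H] [T2Space H]

theorem exists_eq_comp_of_injective_of_range_le {S : F →L[𝕜] H} {T : G →L[𝕜] H}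
    (hS : Function.Injective S) (hran : T.range ≤ S.range) :
    ∃ D : G →L[𝕜] F, T = S ∘L D := by
  let D : G →ₗ[𝕜] F :=
    LinearMap.codRestrictOfInjective T.toLinearMap S.toLinearMap hS fun x ↦ hran ⟨x, rfl⟩
  have hSD (x : G) : S (D x) = T x :=
    LinearMap.codRestrictOfInjective_comp_apply T.toLinearMap S.toLinearMap hS _ x
  have hgraph : (D.graph : Set (G × F)) = {p | S p.2 = T p.1} := by
    ext p
    simp only [SetLike.mem_coe, LinearMap.mem_graph_iff, Set.mem_ofPred_eq, ← hSD, hS.eq_iff]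
  have hclosed : IsClosed (D.graph : Set (G × F)) := by
    rw [hgraph]
    exact isClosed_eq (by fun_prop) (by fun_prop)
  exact ⟨.ofIsClosedGraph hclosed, ContinuousLinearMap.ext fun x ↦ (hSD x).symm⟩

theorem exists_eq_comp_of_isCompl_ker_of_range_le {S : F →L[𝕜] H} {T : G →L[𝕜] H}
    {V : Submodule 𝕜 F} (hV : IsClosed (V : Set F)) (hcompl : IsCompl V S.ker)
    (hran : T.range ≤ S.range) :
    ∃ D : G →L[𝕜] F, T = S ∘L D := by
  have : CompleteSpace V := hV.completeSpace_coe
  have hinj : Function.Injective (S.domRestrict V) :=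
    LinearMap.injective_domRestrict_iff.mpr hcompl.disjoint
  have hran_restrict : (S.domRestrict V).range = S.range :=
    (LinearMap.range_domRestrict V S.toLinearMap).trans
      (Submodule.map_eq_range_iff.mpr hcompl.codisjoint)
  obtain ⟨D, hD⟩ := exists_eq_comp_of_injective_of_range_le hinj (hran.trans hran_restrict.ge)
  exact ⟨V.subtypeL ∘L D, hD⟩

end Factorization

section Hilbert

variable {𝕜 F G H : Type*} [RCLike 𝕜]
  [NormedAddCommGroup F] [InnerProductSpace 𝕜 F] [CompleteSpace F]
  [NormedAddCommGroup G] [CompleteSpace G]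

theorem exists_eq_comp_of_range_le [NormedSpace 𝕜 G]
    [AddCommGroup H] [Module 𝕜 H] [TopologicalSpace H] [T2Space H]
    {S : F →L[𝕜] H} {T : G →L[𝕜] H} (hran : T.range ≤ S.range) :
    ∃ D : G →L[𝕜] F, T = S ∘L D :=
  have : CompleteSpace S.ker := S.isClosed_ker.completeSpace_coe
  exists_eq_comp_of_isCompl_ker_of_range_le S.ker.isClosed_orthogonal
    S.ker.isCompl_orthogonal.symm hran

theorem norm_adjoint_comp_apply_le [InnerProductSpace 𝕜 G]
    [NormedAddCommGroup H] [InnerProductSpace 𝕜 H] [CompleteSpace H]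
    (S : F →L[𝕜] H) (D : G →L[𝕜] F) (h : H) :
    ‖adjoint (S ∘L D) h‖ ≤ ‖D‖ * ‖adjoint S h‖ := by
  rw [adjoint_comp, comp_apply, ← LinearIsometryEquiv.norm_map adjoint D]
  exact (adjoint D).le_opNorm _

end Hilbert

section Frame

variable {Ω H E : Type*} [MeasurableSpace Ω]
  [NormedAddCommGroup H] [InnerProductSpace ℂ H] [CompleteSpace H]
  [NormedAddCommGroup E] [InnerProductSpace ℂ E]
  {ν : Measure Ω} {K : H →L[ℂ] H} {Υ : Ω → H →L[ℂ] E} {A B δ : ℝ}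

theorem IsTightCKgFrame.isCKgFrame (hΥ : IsTightCKgFrame ν K Υ δ) :
    IsCKgFrame ν K Υ δ (max δ (δ * ‖K‖ ^ 2)) := by
  obtain ⟨hδ, hΥ⟩ := hΥ
  refine ⟨hδ, le_max_left _ _, fun h ↦ ⟨(hΥ h).1, (hΥ h).2.ge, ?_⟩⟩
  have hadj : ‖adjoint K h‖ ≤ ‖K‖ * ‖h‖ := by
    simpa only [LinearIsometryEquiv.norm_map] using (adjoint K).le_opNorm h
  calc ∫ ξ, ‖Υ ξ h‖ ^ 2 ∂ν = δ * ‖adjoint K h‖ ^ 2 := (hΥ h).2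
    _ ≤ δ * (‖K‖ * ‖h‖) ^ 2 := by gcongr
    _ = δ * ‖K‖ ^ 2 * ‖h‖ ^ 2 := by ring
    _ ≤ max δ (δ * ‖K‖ ^ 2) * ‖h‖ ^ 2 := by gcongr; exact le_max_right _ _

theorem IsCKgFrame.comp_right (hΥ : IsCKgFrame ν K Υ A B) (D : H →L[ℂ] H) :
    IsCKgFrame ν (K ∘L D) Υ (A / (‖D‖ ^ 2 + 1)) B := by
  obtain ⟨hA, hAB, hΥ⟩ := hΥ
  have hle : A / (‖D‖ ^ 2 + 1) ≤ A := div_le_self hA.le (by simp)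
  refine ⟨by positivity, hle.trans hAB, fun h ↦ ⟨(hΥ h).1, ?_, (hΥ h).2.2⟩⟩
  have hcoeff : A / (‖D‖ ^ 2 + 1) * ‖D‖ ^ 2 ≤ A := by
    rw [div_mul_eq_mul_div, div_le_iff₀ (by positivity)]
    gcongr
    simp
  calc A / (‖D‖ ^ 2 + 1) * ‖adjoint (K ∘L D) h‖ ^ 2
      ≤ A / (‖D‖ ^ 2 + 1) * (‖D‖ * ‖adjoint K h‖) ^ 2 := by
        gcongr
        exact norm_adjoint_comp_apply_le K D h
    _ = A / (‖D‖ ^ 2 + 1) * ‖D‖ ^ 2 * ‖adjoint K h‖ ^ 2 := by ring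
    _ ≤ A * ‖adjoint K h‖ ^ 2 := by gcongr
    _ ≤ ∫ ξ, ‖Υ ξ h‖ ^ 2 ∂ν := (hΥ h).2.1

theorem stmt10_general {K1 K2 : H →L[ℂ] H} (hΥ : IsCKgFrame ν K1 Υ A B)
    (hran : Set.range K2 ⊆ Set.range K1) :
    ∃ A' : ℝ, IsCKgFrame ν K2 Υ A' B := by
  obtain ⟨D, rfl⟩ := exists_eq_comp_of_range_le (S := K1) (T := K2) hran
  exact ⟨_, hΥ.comp_right D⟩

end Frame

theorem stmt10 {Ω H E : Type*} [MeasurableSpace Ω]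
    [NormedAddCommGroup H] [InnerProductSpace ℂ H] [CompleteSpace H]
    [NormedAddCommGroup E] [InnerProductSpace ℂ E]
    (ν : Measure Ω) (K1 K2 : H →L[ℂ] H) (Υ : Ω → H →L[ℂ] E) (δ : ℝ)
    (htight : IsTightCKgFrame ν K1 Υ δ)
    (hran : Set.range ⇑K2 ⊆ Set.range ⇑K1) :
    ∃ A B : ℝ, IsCKgFrame ν K2 Υ A B := by
  obtain ⟨A, hA⟩ := stmt10_general htight.isCKgFrame hran
  exact ⟨A, _, hA⟩
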